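/- Let F : S → G(S) be a Markov chain on a measurable space S and let A, B ⊆ S be measurable. If there exists a lexicographic generalised Streett supermartingale for (F, A, B), then ℙ_{s₀}[Streett(A,B)] = 1 for every initial state s₀ ∈ S. -/

import Mathlib

open MeasureTheory ProbabilityTheory Set
open scoped ENNReal NNReal

variable {S : Type*} [MeasurableSpace S]

/-- Prepend an initial state to a trace. -/
def prep (s₀ : S) (ω : ℕ → S) : ℕ → S := fun n => Nat.rec s₀ (fun k _ => ω k) n

/-- The Streett condition for the pair `(A, B)`: either `A` is visited only
finitely often, or `B` is visited infinitely often. -/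
def streett (A B : Set S) : Set (ℕ → S) :=
  {ω | {i : ℕ | ω i ∈ A}.Finite ∨ {i : ℕ | ω i ∈ B}.Infinite}

/-- The strict lexicographic supermartingale ordering on `[0,∞]^m`:
`r ≻ r'` iff there is a level `l` with `r i ≥ r' i` for all `i < l` and
`r l ≥ 1 + r' l`. -/
def lexGT {m : ℕ} (r r' : Fin m → ℝ≥0∞) : Prop :=
  ∃ l : Fin m, (∀ i < l, r' i ≤ r i) ∧ r' l + 1 ≤ r l

/-- The non-strict lexicographic supermartingale ordering: the union of `≻` with
the componentwise order. -/
def lexGE {m : ℕ} (r r' : Fin m → ℝ≥0∞) : Prop :=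
  lexGT r r' ∨ ∀ i, r' i ≤ r i

/-- The next-time operator applied componentwise: `(𝕏 r)(s) = ∫ r dF(s)`. -/
noncomputable def nextTimeV (F : Kernel S S) {m : ℕ} (r : S → Fin m → ℝ≥0∞) :
    S → Fin m → ℝ≥0∞ :=
  fun s i => ∫⁻ y, r y i ∂(F s)

/-- A lexicographic generalised Streett supermartingale (LexGSSM) for `(F, A, B)`:
a measurable `[0,∞)^m`-valued function `r` with `(𝕏 r)(x) ≺ r(x)` on `A ∖ B` and
`(𝕏 r)(x) ⪯ r(x)` outside `A ∪ B`. -/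
def IsLexGSSM (F : Kernel S S) (A B : Set S) {m : ℕ} (r : S → Fin m → ℝ≥0∞) : Prop :=
  (∀ i, Measurable fun x => r x i) ∧ (∀ x i, r x i ≠ ⊤) ∧
    (∀ x ∈ A \ B, lexGT (r x) (nextTimeV F r x)) ∧
    (∀ x ∉ A ∪ B, lexGE (r x) (nextTimeV F r x))

open Classical in
noncomputable def cntV (G D : Set S) : ℕ → (ℕ → S) → ℝ≥0∞
  | 0 => fun _ => 0
  | n + 1 => fun ω => G.indicator 1 (ω 0) *
      (D.indicator 1 (ω 0) + cntV G D n (fun k => ω (k + 1)))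

lemma measurable_tl : Measurable (fun (ω : ℕ → S) (k : ℕ) => ω (k + 1)) :=
  measurable_pi_lambda _ fun k => measurable_pi_apply (k + 1)

lemma measurable_cntV {G D : Set S} (hG : MeasurableSet G) (hD : MeasurableSet D) (n : ℕ) :
    Measurable (cntV G D n) := by
  induction n with
  | zero => exact measurable_const
  | succ n ih =>
    have h1 : Measurable (fun ω : ℕ → S => G.indicator (1 : S → ℝ≥0∞) (ω 0)) :=
      (measurable_one.indicator hG).comp (measurable_pi_apply 0)
    have h2 : Measurable (fun ω : ℕ → S => D.indicator (1 : S → ℝ≥0∞) (ω 0)) :=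
      (measurable_one.indicator hD).comp (measurable_pi_apply 0)
    exact h1.mul (h2.add (ih.comp measurable_tl))

lemma cntV_mono_succ (G D : Set S) (n : ℕ) : ∀ ω, cntV G D n ω ≤ cntV G D (n + 1) ω := by
  induction n with
  | zero => intro ω; exact zero_le
  | succ n ih =>
    intro ω
    have := ih (fun k => ω (k + 1))
    rw [cntV, cntV]
    dsimp only
    gcongr

lemma cntV_shift (G D : Set S) (n a : ℕ) : ∀ ω : ℕ → S, (∀ i, ω i ∈ G) →
    cntV G D n (fun k => ω (k + a)) ≤ cntV G D (n + a) ω := by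
  induction a with
  | zero => intro ω _; simp
  | succ a ih =>
    intro ω h
    have := ih (fun k => ω (k + 1)) (fun i => h _)
    rw [← add_assoc, cntV]
    simp only [indicator_of_mem (h 0), Pi.one_apply, one_mul]
    refine le_trans ?_ (le_add_of_nonneg_left zero_le)
    simpa [add_assoc] using this

lemma cntV_unbounded (G D : Set S) (k : ℕ) : ∀ ω : ℕ → S, (∀ i, ω i ∈ G) →
    (∀ N, ∃ i, N ≤ i ∧ ω i ∈ D) → ∃ n, (k : ℝ≥0∞) ≤ cntV G D n ω := by
  induction k with
  | zero => intro ω _ _; exact ⟨0, by simp⟩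
  | succ k ih =>
    intro ω h hD
    obtain ⟨i, -, hi⟩ := hD 0
    obtain ⟨n, hn⟩ := ih (fun k => ω (k + (i + 1))) (fun j => h _) (fun N => by
      obtain ⟨j, hj, hj'⟩ := hD (N + (i + 1))
      refine ⟨j - (i + 1), by omega, ?_⟩
      have : j - (i + 1) + (i + 1) = j := by omega
      simpa [this] using hj')
    refine ⟨n + 1 + i, le_trans ?_ (cntV_shift G D (n + 1) i ω h)⟩
    rw [cntV]
    simp only [zero_add, indicator_of_mem (h i), indicator_of_mem hi, Pi.one_apply, one_mul]
    rw [Nat.cast_add, add_comm, Nat.cast_one]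
    gcongr
    simpa [add_assoc, add_comm, add_left_comm] using hn

lemma measurable_prep2 : Measurable (fun p : S × (ℕ → S) => prep p.1 p.2) := by
  refine measurable_pi_lambda _ fun n => ?_
  cases n with
  | zero => exact measurable_fst
  | succ n => exact (measurable_pi_apply n).comp measurable_snd

lemma measurable_prep (s : S) : Measurable (prep s) :=
  measurable_prep2.comp measurable_prodMk_left

noncomputable def fullK (P : Kernel S (ℕ → S)) : Kernel S (ℕ → S) :=
  (Kernel.id ×ₖ P).map (fun p : S × (ℕ → S) => prep p.1 p.2)

lemma fullK_apply (P : Kernel S (ℕ → S)) [IsMarkovKernel P] (s : S) :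
    fullK P s = (P s).map (prep s) := by
  rw [fullK, Kernel.map_apply _ measurable_prep2, Kernel.prod_apply, Kernel.id_apply,
    Measure.dirac_prod, Measure.map_map measurable_prep2 measurable_prodMk_left]
  rfl

section
variable (F : Kernel S S) [IsMarkovKernel F] (P : Kernel S (ℕ → S)) [IsMarkovKernel P]
  (hP : ∀ s₀ : S, (P s₀ : Measure (ℕ → S)) = (F s₀).bind fun s₁ => (P s₁).map (prep s₁))

lemma lintegral_P
    (hP : ∀ s₀ : S, (P s₀ : Measure (ℕ → S)) = (F s₀).bind fun s₁ => (P s₁).map (prep s₁))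
    (s : S) {g : (ℕ → S) → ℝ≥0∞} (hg : Measurable g) :
    ∫⁻ ω, g ω ∂(P s) = ∫⁻ y, ∫⁻ ω, g ω ∂(fullK P y) ∂(F s) := by
  have : (P s : Measure (ℕ → S)) = (F s).bind (fullK P) := by
    rw [hP s]; congr 1; funext y; rw [fullK_apply]
  rw [this, Measure.lintegral_bind (fullK P).measurable.aemeasurable hg.aemeasurable]

lemma measure_P
    (hP : ∀ s₀ : S, (P s₀ : Measure (ℕ → S)) = (F s₀).bind fun s₁ => (P s₁).map (prep s₁))
    (s : S) {E : Set (ℕ → S)} (hE : MeasurableSet E) :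
    P s E = ∫⁻ y, fullK P y E ∂(F s) := by
  have := lintegral_P F P hP s (measurable_one.indicator hE)
  simpa [lintegral_indicator_one hE] using this

lemma lintegral_cntV_le
    (hP : ∀ s₀ : S, (P s₀ : Measure (ℕ → S)) = (F s₀).bind fun s₁ => (P s₁).map (prep s₁))
    {G D : Set S} (hG : MeasurableSet G) (hD : MeasurableSet D)
    (f : S → ℝ≥0∞) (h1 : ∀ x ∈ G, ∫⁻ y, f y ∂(F x) ≤ f x)
    (h2 : ∀ x ∈ D, ∫⁻ y, f y ∂(F x) + 1 ≤ f x) (n : ℕ) :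
    ∀ s, ∫⁻ ω, cntV G D n ω ∂(fullK P s) ≤ f s := by
  induction n with
  | zero => intro s; simp [cntV]
  | succ n ih =>
    intro s
    rw [fullK_apply, lintegral_map (measurable_cntV hG hD _) (measurable_prep s)]
    have e : ∀ ω, cntV G D (n + 1) (prep s ω) =
        G.indicator 1 s * (D.indicator 1 s + cntV G D n ω) := fun ω => rfl
    simp only [e]
    by_cases hs : s ∈ G
    · simp only [indicator_of_mem hs, Pi.one_apply, one_mul]
      rw [lintegral_add_left measurable_const, lintegral_P F P hP s (measurable_cntV hG hD n)]
      have h3 : ∫⁻ y, ∫⁻ ω, cntV G D n ω ∂(fullK P y) ∂(F s) ≤ ∫⁻ y, f y ∂(F s) :=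
        lintegral_mono ih
      rw [lintegral_const, measure_univ, mul_one]
      by_cases hd : s ∈ D
      · simp only [indicator_of_mem hd, Pi.one_apply]
        rw [add_comm]
        exact le_trans (by gcongr) (h2 s hd)
      · simp only [indicator_of_notMem hd, zero_add]
        exact h3.trans (h1 s hs)
    · simp [indicator_of_notMem hs]

lemma fullK_bad
    (hP : ∀ s₀ : S, (P s₀ : Measure (ℕ → S)) = (F s₀).bind fun s₁ => (P s₁).map (prep s₁))
    {G D : Set S} (hG : MeasurableSet G) (hD : MeasurableSet D)
    (f : S → ℝ≥0∞) (hf : ∀ x, f x ≠ ⊤) (h1 : ∀ x ∈ G, ∫⁻ y, f y ∂(F x) ≤ f x)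
    (h2 : ∀ x ∈ D, ∫⁻ y, f y ∂(F x) + 1 ≤ f x) (N : ℕ) :
    ∀ s, fullK P s {ω | (⨆ n, cntV G D n (fun k => ω (k + N))) = ⊤} = 0 := by
  have hm : Measurable (fun ω : ℕ → S => ⨆ n, cntV G D n ω) :=
    Measurable.iSup fun n => measurable_cntV hG hD n
  have hmN : ∀ N, MeasurableSet
      {ω : ℕ → S | (⨆ n, cntV G D n (fun k => ω (k + N))) = ⊤} := fun N => by
    have : Measurable (fun (ω : ℕ → S) (k : ℕ) => ω (k + N)) :=
      measurable_pi_lambda _ fun k => measurable_pi_apply (k + N)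
    exact (hm.comp this) (measurableSet_singleton ⊤)
  induction N with
  | zero =>
    intro s
    have hle : ∫⁻ ω, (⨆ n, cntV G D n ω) ∂(fullK P s) ≤ f s := by
      rw [lintegral_iSup (fun n => measurable_cntV hG hD n)
        (monotone_nat_of_le_succ fun n ω => cntV_mono_succ G D n ω)]
      exact iSup_le fun n => lintegral_cntV_le F P hP hG hD f h1 h2 n s
    have := ae_lt_top hm (ne_top_of_le_ne_top (hf s) hle)
    rw [ae_iff] at this
    simpa using this
  | succ N ih =>
    intro s
    rw [fullK_apply, Measure.map_apply (measurable_prep s) (hmN _)]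
    have : prep s ⁻¹' {ω | (⨆ n, cntV G D n (fun k => ω (k + (N + 1)))) = ⊤} =
      {ω | (⨆ n, cntV G D n (fun k => ω (k + N))) = ⊤} := rfl
    rw [this, measure_P F P hP s (hmN N)]
    simp [ih]

lemma ae_not_bad
    (hP : ∀ s₀ : S, (P s₀ : Measure (ℕ → S)) = (F s₀).bind fun s₁ => (P s₁).map (prep s₁))
    {G D : Set S} (hG : MeasurableSet G) (hD : MeasurableSet D)
    (f : S → ℝ≥0∞) (hf : ∀ x, f x ≠ ⊤) (h1 : ∀ x ∈ G, ∫⁻ y, f y ∂(F x) ≤ f x)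
    (h2 : ∀ x ∈ D, ∫⁻ y, f y ∂(F x) + 1 ≤ f x) (s : S) :
    ∀ᵐ ω ∂(P s), ¬ ((∃ N, ∀ i, N ≤ i → ω i ∈ G) ∧ ∀ N, ∃ i, N ≤ i ∧ ω i ∈ D) := by
  have key : ∀ N, ∀ᵐ ω ∂(P s), ¬ (⨆ n, cntV G D n (fun k => ω (k + N))) = ⊤ := fun N => by
    rw [ae_iff]
    have h := fullK_bad F P hP hG hD f hf h1 h2 (N + 1) s
    rw [fullK_apply] at h
    have h' := Measure.preimage_null_of_map_null (measurable_prep s).aemeasurable h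
    simp only [not_not]
    exact h'
  filter_upwards [ae_all_iff.2 key] with ω hω
  rintro ⟨⟨N, hN⟩, hi⟩
  apply hω N
  apply ENNReal.eq_top_of_forall_nnreal_le
  intro q
  obtain ⟨k, hk⟩ := exists_nat_ge q
  obtain ⟨n, hn⟩ := cntV_unbounded G D k (fun k => ω (k + N)) (fun i => hN _ (by omega))
    (fun M => by
      obtain ⟨j, hj, hj'⟩ := hi (M + N)
      refine ⟨j - N, by omega, ?_⟩
      have : j - N + N = j := by omega
      simpa [this] using hj')
  refine le_trans ?_ (hn.trans (le_iSup (fun n => cntV G D n (fun k => ω (k + N))) n))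
  exact_mod_cast hk

end

/-- If a lexicographic generalised Streett supermartingale exists for `(F, A, B)`,
then the Streett condition for `(A, B)` holds almost surely from every initial
state. -/
theorem LexGSSM_implies_streett_as
    (F : Kernel S S) [IsMarkovKernel F]
    (P : Kernel S (ℕ → S)) [IsMarkovKernel P]
    (hP : ∀ s₀ : S, (P s₀ : Measure (ℕ → S)) = (F s₀).bind fun s₁ => (P s₁).map (prep s₁))
    (A B : Set S) (hA : MeasurableSet A) (hB : MeasurableSet B)
    (hLex : ∃ (m : ℕ) (r : S → Fin m → ℝ≥0∞), IsLexGSSM F A B r) :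
    ∀ s₀ : S, P s₀ (streett A B) = 1 := by
  obtain ⟨m, r, hr, hfin, hAB, hN⟩ := hLex
  intro s
  have hX : ∀ i, Measurable fun x => nextTimeV F r x i := fun i => (hr i).lintegral_kernel
  let G : Fin m → Set S := fun l => Bᶜ ∩ ⋂ i, ⋂ (_ : i ≤ l), {x | nextTimeV F r x i ≤ r x i}
  let D : Fin m → Set S := fun l => G l ∩ {x | nextTimeV F r x l + 1 ≤ r x l}
  have hG : ∀ l, MeasurableSet (G l) := fun l =>
    hB.compl.inter (MeasurableSet.iInter fun i => MeasurableSet.iInter fun _ =>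
      measurableSet_le (hX i) (hr i))
  have hD : ∀ l, MeasurableSet (D l) := fun l =>
    (hG l).inter (measurableSet_le ((hX l).add_const 1) (hr l))
  have hGm : ∀ {l x}, x ∈ G l ↔ x ∉ B ∧ ∀ i ≤ l, nextTimeV F r x i ≤ r x i := by
    intro l x; simp [G]
  have hlex : ∀ x, x ∉ B → lexGT (r x) (nextTimeV F r x) → ∃ l, x ∈ D l := by
    rintro x hx ⟨l, h1, h2⟩
    refine ⟨l, hGm.2 ⟨hx, fun i hi => ?_⟩, h2⟩
    rcases hi.lt_or_eq with h | rfl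
    · exact h1 i h
    · exact le_trans le_self_add h2
  have hdich : ∀ x, x ∉ B → (∃ l, x ∈ D l) ∨ ∀ l, x ∈ G l := by
    intro x hx
    by_cases hxA : x ∈ A
    · exact Or.inl (hlex x hx (hAB x ⟨hxA, hx⟩))
    · rcases hN x (by simp [hx, hxA]) with h | h
      · exact Or.inl (hlex x hx h)
      · exact Or.inr fun l => hGm.2 ⟨hx, fun i _ => h i⟩
  have hae : ∀ᵐ ω ∂(P s), ω ∈ streett A B := by
    have h := ae_all_iff.2 fun l => ae_not_bad F P hP (hG l) (hD l) (fun x => r x l)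
      (fun x => hfin x l) (fun x hx => (hGm.1 hx).2 l le_rfl) (fun x hx => hx.2) s
    filter_upwards [h] with ω hω
    by_contra hbad
    simp only [streett, mem_setOf_eq, not_or, not_infinite] at hbad
    obtain ⟨hinf, hfinB⟩ := hbad
    have hev : ∀ᶠ i in Filter.atTop, ω i ∉ B := by
      rw [← Nat.cofinite_eq_atTop, Filter.eventually_cofinite]
      simpa using hfinB
    have hfr : ∃ᶠ i in Filter.atTop, ω i ∈ A := Nat.frequently_atTop_iff_infinite.2 hinf
    have hex : ∃ l, ∃ᶠ i in Filter.atTop, ω i ∈ D l := by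
      by_contra hne
      simp only [not_exists, Filter.not_frequently] at hne
      obtain ⟨i, ⟨hi1, hi2⟩, hi3⟩ :=
        ((hfr.and_eventually hev).and_eventually (Filter.eventually_all.2 hne)).exists
      obtain ⟨l, hl⟩ := hlex _ hi2 (hAB _ ⟨hi1, hi2⟩)
      exact hi3 l hl
    obtain ⟨l, hl, hmin⟩ := WellFounded.has_min (wellFounded_lt (α := Fin m))
      {l | ∃ᶠ i in Filter.atTop, ω i ∈ D l} hex
    have hlow : ∀ᶠ i in Filter.atTop, ∀ j, j < l → ω i ∉ D j := by
      rw [Filter.eventually_all]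
      intro j
      by_cases hj : j < l
      · have := fun h => hmin j h hj
        simp only [mem_setOf_eq, Filter.not_frequently] at this
        filter_upwards [Filter.not_frequently.1 this] with i hi _ using hi
      · exact Filter.Eventually.of_forall fun i h => absurd h hj
    refine hω l ⟨Filter.eventually_atTop.1 ?_, fun N => ?_⟩
    · filter_upwards [hlow, hev] with i h1 h2
      rcases hdich _ h2 with ⟨j, hj⟩ | h
      · have hlj : l ≤ j := not_lt.1 fun h => h1 j h hj
        exact hGm.2 ⟨h2, fun i hi => (hGm.1 hj.1).2 i (hi.trans hlj)⟩
      · exact h l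
    · exact Filter.frequently_atTop.1 hl N
  have : streett A B =ᵐ[P s] univ := by
    filter_upwards [hae] with ω hω
    exact eq_true hω |>.trans (eq_true (mem_univ ω)).symm
  rw [measure_congr this, measure_univ]
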